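/- Let P ⊆ ℝ^d be a d-dimensional simplicial reflexive polytope and F a special facet of P. Then |H_P(F,1)| = d, |H_P(F,0)| ≤ d, and 0 ≤ d + Σ_{i ≤ −1} i·|H_P(F,i)|; in particular Σ_{i ≤ −1} |H_P(F,i)| ≤ d. -/

import Mathlib

noncomputable section

/-- The standard inner product on `ℝ^d`. -/
def dotp {d : ℕ} (x y : Fin d → ℝ) : ℝ := ∑ i, x i * y i

/-- `x` is a point of the lattice `ℤ^d`. -/
def IsLP {d : ℕ} (x : Fin d → ℝ) : Prop := ∀ i, ∃ n : ℤ, x i = (n : ℝ)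

/-- A lattice polytope: convex hull of finitely many lattice points. -/
def IsLatticePolytope {d : ℕ} (P : Set (Fin d → ℝ)) : Prop :=
  ∃ V : Finset (Fin d → ℝ), (∀ v ∈ V, IsLP v) ∧ P = convexHull ℝ (V : Set (Fin d → ℝ))

/-- The dual polytope `P* = {x | ⟨x,y⟩ ≤ 1 ∀ y ∈ P}`. -/
def dualPolytope {d : ℕ} (P : Set (Fin d → ℝ)) : Set (Fin d → ℝ) :=
  {x | ∀ y ∈ P, dotp x y ≤ 1}

/-- `P` is a reflexive polytope: a (`d`-dimensional) lattice polytope with `0` in its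
interior whose dual is again a lattice polytope. -/
def IsReflexive {d : ℕ} (P : Set (Fin d → ℝ)) : Prop :=
  IsLatticePolytope P ∧ (0 : Fin d → ℝ) ∈ interior P ∧ IsLatticePolytope (dualPolytope P)

/-- `F` is a facet of `P` with (uniquely determined) outer normal `u`, normalized by
`⟨u, F⟩ = 1` (possible since `0` is in the interior of `P`). -/
def IsFacetNormal {d : ℕ} (P F : Set (Fin d → ℝ)) (u : Fin d → ℝ) : Prop :=
  F.Nonempty ∧ (∀ y ∈ P, dotp u y ≤ 1) ∧ F = {y ∈ P | dotp u y = 1} ∧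
    Module.finrank ℝ (vectorSpan ℝ F) = d - 1

/-- `F` is a facet of `P`. -/
def IsFacet {d : ℕ} (P F : Set (Fin d → ℝ)) : Prop := ∃ u, IsFacetNormal P F u

/-- `P` is simplicial: every facet has exactly `d` vertices. -/
def IsSimplicial {d : ℕ} (P : Set (Fin d → ℝ)) : Prop :=
  ∀ F, IsFacet P F → (Set.extremePoints ℝ F).ncard = d

/-
Let `u` be the normal of a facet `F`. Reflexivity makes `u` integral, so a vertex lies at height
`1`, `0` or at most `-1` over `F`; the vertices at height `1` are the `d` vertices of `F`, and
pairing the sum of all vertices with `u` bounds the total negative height by `d`.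

The vertices of `F` form a basis of `ℝ^d`. A vertex at height `0` has coordinate sum `0` and is
nonzero, so some coordinate `i` of it is negative. The facet adjacent to `F` across the ridge
opposite to the `i`-th vertex has normal `u - t * (i-th coordinate)` with `t > 0`, which is integral
and positive there, hence equal to `1`: the vertex lies on that facet. As `P` is simplicial, this
facet has only one vertex outside `F`, so each `i` accounts for at most one vertex at height `0`.
-/

section LinearAlgebra

variable {𝕜 E : Type*} [AddCommGroup E]

theorem finrank_span_eq_finrank_vectorSpan_add_one [DivisionRing 𝕜] [Module 𝕜 E]
    [FiniteDimensional 𝕜 E] {f : E →ₗ[𝕜] 𝕜} {s : Set E} (hs : s.Nonempty)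
    (hf : ∀ x ∈ s, f x = 1) :
    Module.finrank 𝕜 (Submodule.span 𝕜 s) = Module.finrank 𝕜 (vectorSpan 𝕜 s) + 1 := by
  obtain ⟨p, hp⟩ := hs
  have vectorSpan_le_ker : vectorSpan 𝕜 s ≤ LinearMap.ker f := by
    rw [vectorSpan_def, Submodule.span_le]
    rintro _ ⟨x, hx, y, hy, rfl⟩
    simp [hf x hx, hf y hy]
  have p_notMem : p ∉ vectorSpan 𝕜 s := fun h => by
    simpa [hf p hp] using vectorSpan_le_ker h
  rw [← Submodule.finrank_sup_span_singleton p_notMem]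
  suffices Submodule.span 𝕜 s = vectorSpan 𝕜 s ⊔ Submodule.span 𝕜 {p} by rw [this]
  refine le_antisymm (Submodule.span_le.2 fun x hx => ?_) (sup_le ?_ ?_)
  · rw [← sub_add_cancel x p]
    exact Submodule.add_mem_sup (vsub_mem_vectorSpan 𝕜 hx hp) (Submodule.mem_span_singleton_self p)
  · rw [vectorSpan_def, Submodule.span_le]
    rintro _ ⟨x, hx, y, hy, rfl⟩
    exact sub_mem (Submodule.subset_span hx) (Submodule.subset_span hy)
  · exact Submodule.span_mono (Set.singleton_subset_iff.2 hp)

theorem span_insert_eq_top_of_notMem [DivisionRing 𝕜] [Module 𝕜 E] {s : Set E} {x w : E}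
    (hx : Submodule.span 𝕜 (insert x s) = ⊤) (hw : w ∉ Submodule.span 𝕜 s) :
    Submodule.span 𝕜 (insert w s) = ⊤ := by
  have x_mem : x ∈ Submodule.span 𝕜 (insert w s) :=
    mem_span_insert_exchange (hx ▸ Submodule.mem_top) hw
  rw [eq_top_iff, ← hx, Submodule.span_le, Set.insert_subset_iff]
  exact ⟨x_mem, (Set.subset_insert w s).trans Submodule.subset_span⟩

theorem span_insert_diff_eq_top_of_coord_ne_zero {ι : Type*} [DivisionRing 𝕜]
    [Module 𝕜 E] (b : Module.Basis ι 𝕜 E) {i : ι} {w : E} (hw : b.coord i w ≠ 0) :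
    Submodule.span 𝕜 (insert w (Set.range b \ {b i})) = ⊤ := by
  refine span_insert_eq_top_of_notMem (x := b i) ?_ fun h => hw ?_
  · rw [Set.insert_sdiff_self_of_mem (Set.mem_range_self i), b.span_eq]
  · suffices Submodule.span 𝕜 (Set.range b \ {b i}) ≤ LinearMap.ker (b.coord i) from this h
    rw [Submodule.span_le]
    rintro _ ⟨⟨j, rfl⟩, hj⟩
    have hij : j ≠ i := fun h => hj (congrArg b h)
    simp [hij]

theorem exists_coord_neg_of_apply_nonpos {ι : Type*} [Finite ι] [Field 𝕜] [LinearOrder 𝕜]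
    [IsStrictOrderedRing 𝕜] [Module 𝕜 E] (b : Module.Basis ι 𝕜 E)
    {f : Module.Dual 𝕜 E} (hf : ∀ i, 0 < f (b i)) {x : E} (hx : x ≠ 0) (hfx : f x ≤ 0) :
    ∃ i, b.coord i x < 0 := by
  have := Fintype.ofFinite ι
  by_contra! coord_nonneg
  have coord_mul_nonneg : ∀ i ∈ Finset.univ, 0 ≤ b.repr x i * f (b i) := fun i _ =>
    mul_nonneg (coord_nonneg i) (hf i).le
  have sum_eq : ∑ i, b.repr x i * f (b i) = f x := by
    conv_rhs => rw [← b.sum_repr x]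
    simp only [map_sum, map_smul, smul_eq_mul]
  have sum_eq_zero : ∑ i, b.repr x i * f (b i) = 0 :=
    le_antisymm (sum_eq.trans_le hfx) (Finset.sum_nonneg coord_mul_nonneg)
  refine hx (b.ext_elem fun i => ?_)
  have := (Finset.sum_eq_zero_iff_of_nonneg coord_mul_nonneg).1 sum_eq_zero i (Finset.mem_univ i)
  simpa [(hf i).ne'] using this

end LinearAlgebra

section FiniteSums

/-- The minimum ratio test of the simplex method: `t` is the least value of
`(c - f v) / (-g v)`. -/
theorem exists_pivot {𝕜 α : Type*} [Field 𝕜] [LinearOrder 𝕜] [IsStrictOrderedRing 𝕜] {s : Set α}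
    (hs : s.Finite) {f g : α → 𝕜} {c : 𝕜} (hf : ∀ v ∈ s, f v ≤ c)
    (hfg : ∀ v ∈ s, g v < 0 → f v < c) (hg : ∃ v ∈ s, g v < 0) :
    ∃ t > 0, (∀ v ∈ s, f v - t * g v ≤ c) ∧ ∃ w ∈ s, g w < 0 ∧ f w - t * g w = c := by
  obtain ⟨w, ⟨hws, hgw⟩, hmin⟩ := Set.exists_min_image {v ∈ s | g v < 0}
    (fun v => (c - f v) / (-g v)) (hs.subset (Set.sep_subset _ _)) hg
  have ratio_pos : 0 < (c - f w) / (-g w) := div_pos (sub_pos.2 (hfg w hws hgw)) (neg_pos.2 hgw)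
  refine ⟨_, ratio_pos, fun v hv => ?_, w, hws, hgw, ?_⟩
  · rcases lt_or_ge (g v) 0 with hgv | hgv
    · have := (le_div_iff₀ (neg_pos.2 hgv)).1 (hmin v ⟨hv, hgv⟩)
      linarith
    · linarith [hf v hv, mul_nonneg ratio_pos.le hgv]
  · have := hgw.ne
    field_simp
    ring

theorem sum_le_card_add_sum_of_int_of_le_one {R α : Type*} [Ring R] [LinearOrder R]
    [IsStrictOrderedRing R] (s : Finset α) {f : α → R}
    (hint : ∀ v ∈ s, ∃ n : ℤ, f v = n) (hle : ∀ v ∈ s, f v ≤ 1) :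
    ∑ v ∈ s, f v ≤ ({v ∈ s | f v = 1}.card : R) + ∑ v ∈ s, if f v ≤ -1 then f v else 0 := by
  rw [← Finset.sum_boole, ← Finset.sum_add_distrib]
  refine Finset.sum_le_sum fun v hv => ?_
  obtain ⟨n, hn⟩ := hint v hv
  have n_le : n ≤ 1 := by exact_mod_cast hn ▸ hle v hv
  obtain rfl | rfl | n_le_neg_one : n = 1 ∨ n = 0 ∨ n ≤ -1 := by omega
  · norm_num [hn]
  · norm_num [hn]
  · have : f v ≤ -1 := by rw [hn]; exact_mod_cast n_le_neg_one
    have ne_one : f v ≠ 1 := (this.trans_lt (neg_one_lt_zero.trans one_pos)).ne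
    rw [if_pos this, if_neg ne_one, zero_add]

theorem card_filter_le_neg_one_le_neg_sum {R α : Type*} [Ring R] [LinearOrder R]
    [IsStrictOrderedRing R] (s : Finset α) (f : α → R) :
    ({v ∈ s | f v ≤ -1}.card : R) ≤ -∑ v ∈ s, if f v ≤ -1 then f v else 0 := by
  have := Finset.sum_le_card_nsmul {v ∈ s | f v ≤ -1} f (-1) fun v hv => (Finset.mem_filter.1 hv).2
  rw [Finset.sum_filter, nsmul_eq_mul, mul_neg_one] at this
  exact le_neg_of_le_neg this

theorem ncard_le_card_of_subset_iUnion {α ι : Type*} [Fintype ι] {s : Set α} {t : ι → Set α}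
    (hst : s ⊆ ⋃ i, t i) (ht : ∀ i, (t i).Subsingleton) : s.ncard ≤ Fintype.card ι := by
  choose i hi using fun x : s => Set.mem_iUnion.1 (hst x.2)
  have i_injective : Function.Injective i := fun x y hxy =>
    Subtype.ext (ht (i x) (hi x) (hxy ▸ hi y))
  rw [← Nat.card_coe_set_eq, ← Nat.card_eq_fintype_card]
  exact Nat.card_le_card_of_injective i i_injective

end FiniteSums

section Polytope

variable {E : Type*}

theorem isExposed_setOf_eq {𝕜 : Type*} [TopologicalSpace 𝕜] [Semiring 𝕜] [PartialOrder 𝕜]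
    [AddCommMonoid E] [TopologicalSpace E] [Module 𝕜 E] {A : Set E} {l : StrongDual 𝕜 E} {c : 𝕜}
    (hl : ∀ x ∈ A, l x ≤ c) : IsExposed 𝕜 A {x ∈ A | l x = c} := by
  rintro ⟨p, hpA, hp⟩
  refine ⟨l, Set.ext fun x => and_congr_right fun hx => ⟨fun h y hy => ?_, fun h => ?_⟩⟩
  · exact h ▸ hl y hy
  · exact (hl x hx).antisymm (hp ▸ h p hpA)

/-- A polytope is the convex hull of a finite set. This is the notion for which faces and
neighbouring facets are discussed, before any lattice enters. -/
def IsPolytope [AddCommGroup E] [Module ℝ E] (P : Set E) : Prop :=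
  ∃ s : Set E, s.Finite ∧ P = convexHull ℝ s

namespace IsPolytope

variable [AddCommGroup E] [Module ℝ E] {P F : Set E}

theorem finite_extremePoints (hP : IsPolytope P) : (Set.extremePoints ℝ P).Finite := by
  obtain ⟨s, hs, rfl⟩ := hP
  exact hs.subset extremePoints_convexHull_subset

theorem convex (hP : IsPolytope P) : Convex ℝ P := by
  obtain ⟨s, -, rfl⟩ := hP
  exact convex_convexHull ℝ s

variable [TopologicalSpace E] [IsTopologicalAddGroup E] [ContinuousSMul ℝ E]

theorem isCompact (hP : IsPolytope P) : IsCompact P := by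
  obtain ⟨s, hs, rfl⟩ := hP
  exact hs.isCompact_convexHull ℝ

variable [T2Space E] [LocallyConvexSpace ℝ E]

theorem convexHull_extremePoints (hP : IsPolytope P) :
    convexHull ℝ (Set.extremePoints ℝ P) = P := by
  have := closure_convexHull_extremePoints hP.isCompact hP.convex
  rwa [(hP.finite_extremePoints.isClosed_convexHull ℝ).closure_eq] at this

theorem of_isExposed (hP : IsPolytope P) (hF : IsExposed ℝ P F) : IsPolytope F := by
  have finite_extremePoints : (Set.extremePoints ℝ F).Finite :=
    hP.finite_extremePoints.subset hF.isExtreme.extremePoints_subset_extremePoints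
  refine ⟨_, finite_extremePoints, ?_⟩
  rw [← (finite_extremePoints.isClosed_convexHull ℝ).closure_eq,
    closure_convexHull_extremePoints (hF.isCompact hP.isCompact) (hF.convex hP.convex)]

theorem span_extremePoints (hP : IsPolytope P) :
    Submodule.span ℝ (Set.extremePoints ℝ P) = Submodule.span ℝ P := by
  refine le_antisymm (Submodule.span_mono extremePoints_subset) (Submodule.span_le.2 ?_)
  conv_lhs => rw [← hP.convexHull_extremePoints]
  exact convexHull_min Submodule.subset_span (Submodule.convex _)

theorem apply_le_of_forall_extremePoints (hP : IsPolytope P) {f : Module.Dual ℝ E} {c : ℝ}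
    (hf : ∀ v ∈ Set.extremePoints ℝ P, f v ≤ c) : ∀ y ∈ P, f y ≤ c := by
  rw [← hP.convexHull_extremePoints]
  exact convexHull_min hf ((convex_Iic c).linear_preimage f)

theorem exists_extremePoint_apply_neg (hP : IsPolytope P) (h0 : (0 : E) ∈ interior P)
    {f : StrongDual ℝ E} (hf : f ≠ 0) : ∃ v ∈ Set.extremePoints ℝ P, f v < 0 := by
  by_contra! nonneg
  have nonneg_on : ∀ y ∈ P, (-f) y ≤ 0 :=
    hP.apply_le_of_forall_extremePoints (f := (-f).toLinearMap) fun v hv =>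
      neg_nonpos.2 (nonneg v hv)
  have image_subset : f '' interior P ⊆ Set.Ici 0 := by
    rintro _ ⟨y, hy, rfl⟩
    exact neg_nonpos.1 (nonneg_on y (interior_subset hy))
  have image_subset_Ioi : f '' interior P ⊆ Set.Ioi 0 := by
    rw [← interior_Ici]
    exact interior_maximal image_subset (f.isOpenMap_of_ne_zero hf _ isOpen_interior)
  exact lt_irrefl (0 : ℝ) (image_subset_Ioi ⟨0, h0, map_zero f⟩)

theorem exists_tilt (hP : IsPolytope P) (h0 : (0 : E) ∈ interior P) {f g : StrongDual ℝ E}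
    (hf : ∀ y ∈ P, f y ≤ 1) (hg : g ≠ 0)
    (hfg : ∀ v ∈ Set.extremePoints ℝ P, g v < 0 → f v < 1) :
    ∃ t > (0 : ℝ), (∀ y ∈ P, (f - t • g) y ≤ 1) ∧
      ∃ w ∈ Set.extremePoints ℝ P, g w < 0 ∧ (f - t • g) w = 1 := by
  obtain ⟨t, t_pos, tilt_le, tilt_eq⟩ := exists_pivot hP.finite_extremePoints
    (fun v hv => hf v hv.1) hfg (hP.exists_extremePoint_apply_neg h0 hg)
  exact ⟨t, t_pos, hP.apply_le_of_forall_extremePoints (f := (f - t • g).toLinearMap) tilt_le,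
    tilt_eq⟩

end IsPolytope

end Polytope

section Lattice

variable {d : ℕ} {P F : Set (Fin d → ℝ)} {u : Fin d → ℝ}

/-- The identification of `ℝ^d` with its dual by the standard inner product, through which `dotp`
inherits bilinearity, continuity and nondegeneracy. -/
def dotpDual : (Fin d → ℝ) ≃ₗ[ℝ] StrongDual ℝ (Fin d → ℝ) :=
  (dotProductEquiv ℝ (Fin d)).trans LinearMap.toContinuousLinearMap

theorem dotpDual_apply (x y : Fin d → ℝ) : dotpDual x y = dotp x y := rfl

theorem dotp_comm (x y : Fin d → ℝ) : dotp x y = dotp y x := dotProduct_comm x y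

theorem IsLP.exists_dotp_eq_intCast {x y : Fin d → ℝ} (hx : IsLP x) (hy : IsLP y) :
    ∃ n : ℤ, dotp x y = n := by
  choose m hm using hx
  choose n hn using hy
  exact ⟨∑ i, m i * n i, by simp [dotp, hm, hn]⟩

theorem IsLatticePolytope.isPolytope (hP : IsLatticePolytope P) : IsPolytope P := by
  obtain ⟨V, -, rfl⟩ := hP
  exact ⟨V, V.finite_toSet, rfl⟩

theorem IsLatticePolytope.isLP_of_mem_extremePoints (hP : IsLatticePolytope P) {v : Fin d → ℝ}
    (hv : v ∈ Set.extremePoints ℝ P) : IsLP v := by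
  obtain ⟨V, hV, rfl⟩ := hP
  exact hV v (extremePoints_convexHull_subset hv)

theorem isFacetNormal_iff_span_eq_top :
    IsFacetNormal P F u ↔ F.Nonempty ∧ (∀ y ∈ P, dotp u y ≤ 1) ∧ F = {y ∈ P | dotp u y = 1} ∧
      Submodule.span ℝ F = ⊤ := by
  refine and_congr_right fun hne => and_congr_right fun _ => and_congr_right fun hFeq => ?_
  have finrank_span := finrank_span_eq_finrank_vectorSpan_add_one (f := (dotpDual u).toLinearMap)
    hne fun y hy => (hFeq ▸ hy).2
  have finrank_le := (Submodule.span ℝ F).finrank_le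
  have span_eq_top_iff : Submodule.span ℝ F = ⊤ ↔ Module.finrank ℝ (Submodule.span ℝ F) = d :=
    ⟨fun h => by rw [h, finrank_top, Module.finrank_fin_fun], fun h =>
      Submodule.eq_top_of_finrank_eq (by simpa using h)⟩
  rw [Module.finrank_fin_fun] at finrank_le
  rw [span_eq_top_iff]
  omega

namespace IsFacetNormal

theorem dotp_le_one (hF : IsFacetNormal P F u) : ∀ y ∈ P, dotp u y ≤ 1 := hF.2.1

theorem subset (hF : IsFacetNormal P F u) : F ⊆ P := hF.2.2.1 ▸ Set.sep_subset _ _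

theorem dotp_eq_one (hF : IsFacetNormal P F u) : ∀ y ∈ F, dotp u y = 1 := fun _ hy =>
  (hF.2.2.1 ▸ hy).2

theorem span_eq_top (hF : IsFacetNormal P F u) : Submodule.span ℝ F = ⊤ :=
  (isFacetNormal_iff_span_eq_top.1 hF).2.2.2

theorem isExposed (hF : IsFacetNormal P F u) : IsExposed ℝ P F := by
  obtain ⟨-, hle, rfl, -⟩ := hF
  exact isExposed_setOf_eq (l := dotpDual u) hle

theorem extremePoints_eq (hF : IsFacetNormal P F u) :
    Set.extremePoints ℝ F = {v ∈ Set.extremePoints ℝ P | dotp u v = 1} := by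
  rw [hF.isExposed.isExtreme.extremePoints_eq, hF.2.2.1]
  ext v
  exact ⟨fun h => ⟨h.2, h.1.2⟩, fun h => ⟨⟨h.1.1, h.2⟩, h.1⟩⟩

theorem dim_pos (hF : IsFacetNormal P F u) : 0 < d := by
  obtain ⟨p, hp⟩ := hF.1
  by_contra! h
  obtain rfl : d = 0 := by omega
  simpa [dotp] using hF.dotp_eq_one p hp

theorem mem_extremePoints_dualPolytope (hF : IsFacetNormal P F u) :
    u ∈ Set.extremePoints ℝ (dualPolytope P) := by
  refine mem_extremePoints_iff_left.2 ⟨hF.dotp_le_one, fun x hx y hy hu => ?_⟩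
  suffices (dotpDual x).toLinearMap = (dotpDual u).toLinearMap from
    dotpDual.injective (ContinuousLinearMap.coe_injective this)
  refine LinearMap.ext_on hF.span_eq_top fun p hp => ?_
  have isExtreme : IsExtreme ℝ (dualPolytope P) {z ∈ dualPolytope P | dotpDual p z = 1} :=
    (isExposed_setOf_eq fun z (hz : z ∈ dualPolytope P) =>
      (dotp_comm p z).trans_le (hz p (hF.subset hp))).isExtreme
  have u_mem : u ∈ {z ∈ dualPolytope P | dotpDual p z = 1} :=
    ⟨hF.dotp_le_one, (dotp_comm p u).trans (hF.dotp_eq_one p hp)⟩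
  calc dotp x p = dotp p x := dotp_comm x p
    _ = 1 := (isExtreme.left_mem_of_mem_openSegment hx hy u_mem hu).2
    _ = dotp u p := (hF.dotp_eq_one p hp).symm

theorem isLP (hF : IsFacetNormal P F u) (hdual : IsLatticePolytope (dualPolytope P)) : IsLP u :=
  hdual.isLP_of_mem_extremePoints hF.mem_extremePoints_dualPolytope

theorem dotp_sum_le (hF : IsFacetNormal P F u) (hdual : IsLatticePolytope (dualPolytope P))
    {s : Finset (Fin d → ℝ)} (hs : ∀ v ∈ s, v ∈ P ∧ IsLP v) :
    dotp u (∑ v ∈ s, v) ≤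
      ({v ∈ s | dotp u v = 1}.card : ℝ) + ∑ v ∈ s, if dotp u v ≤ -1 then dotp u v else 0 := by
  rw [← dotpDual_apply, map_sum]
  exact sum_le_card_add_sum_of_int_of_le_one s
    (fun v hv => (hF.isLP hdual).exists_dotp_eq_intCast (hs v hv).2)
    fun v hv => hF.dotp_le_one v (hs v hv).1

theorem exists_basis_range_eq_extremePoints (hF : IsFacetNormal P F u) (hP : IsPolytope P)
    (hcard : (Set.extremePoints ℝ F).ncard = d) :
    ∃ b : Module.Basis (Fin d) ℝ (Fin d → ℝ), Set.range b = Set.extremePoints ℝ F := by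
  have span_extremePoints : Submodule.span ℝ (Set.extremePoints ℝ F) = ⊤ := by
    rw [(hP.of_isExposed hF.isExposed).span_extremePoints, hF.span_eq_top]
  have := (Set.finite_of_ncard_pos (hcard ▸ hF.dim_pos)).to_subtype
  let e : Set.extremePoints ℝ F ≃ Fin d := Finite.equivFinOfCardEq hcard
  have range_eq : Set.range (fun i => (e.symm i : Fin d → ℝ)) = Set.extremePoints ℝ F := by
    rw [← Function.comp_def, e.symm.surjective.range_comp, Subtype.range_coe]
  exact ⟨basisOfTopLeSpanOfCardEqFinrank (fun i => (e.symm i : Fin d → ℝ))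
    (by rw [range_eq, span_extremePoints]) (by simp), by simpa using range_eq⟩

/-- Tilting the hyperplane of `F` about the ridge opposite to the vertex `b i`, until it meets the
next vertex `w` of `P`, gives the facet adjacent to `F` across that ridge. -/
theorem exists_adjacent (hF : IsFacetNormal P F u) (hP : IsPolytope P)
    (h0 : (0 : Fin d → ℝ) ∈ interior P) {b : Module.Basis (Fin d) ℝ (Fin d → ℝ)}
    (hb : Set.range b = Set.extremePoints ℝ F) (i : Fin d) :
    ∃ G u', IsFacetNormal P G u' ∧ (∃ t > (0 : ℝ), ∀ y, dotp u' y = dotp u y - t * b.coord i y) ∧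
      ∃ w ∉ Set.extremePoints ℝ F,
        insert w (Set.extremePoints ℝ F \ {b i}) ⊆ Set.extremePoints ℝ G := by
  have coord_nonneg : ∀ v ∈ Set.extremePoints ℝ F, 0 ≤ b.coord i v := by
    rw [← hb]
    rintro _ ⟨j, rfl⟩
    simp only [Module.Basis.coord_apply, Module.Basis.repr_self, Finsupp.single_apply]
    split_ifs <;> norm_num
  let g : StrongDual ℝ (Fin d → ℝ) := LinearMap.toContinuousLinearMap (b.coord i)
  have g_ne_zero : g ≠ 0 := fun h => by simpa [g] using DFunLike.congr_fun h (b i)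
  have dotp_lt_one : ∀ v ∈ Set.extremePoints ℝ P, g v < 0 → dotp u v < 1 := fun v hv g_neg =>
    (hF.dotp_le_one v hv.1).lt_of_ne fun h =>
      g_neg.not_ge (coord_nonneg v (hF.extremePoints_eq ▸ ⟨hv, h⟩))
  obtain ⟨t, t_pos, tilt_le, w, hw, g_w, tilt_w⟩ :=
    hP.exists_tilt h0 (f := dotpDual u) hF.dotp_le_one g_ne_zero dotp_lt_one
  obtain ⟨u', hu'⟩ := dotpDual.surjective (dotpDual u - t • g)
  have dotp_u' : ∀ y, dotp u' y = (dotpDual u - t • g) y := fun y => DFunLike.congr_fun hu' y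
  have vertices_mem : insert w (Set.extremePoints ℝ F \ {b i}) ⊆
      {v ∈ Set.extremePoints ℝ P | dotp u' v = 1} := by
    refine Set.insert_subset ⟨hw, (dotp_u' w).trans tilt_w⟩ ?_
    rintro v ⟨hv, hvi⟩
    obtain ⟨hvP, hv1⟩ := hF.extremePoints_eq ▸ hv
    obtain ⟨j, rfl⟩ := hb ▸ hv
    have hij : j ≠ i := fun h => hvi (congrArg b h)
    exact ⟨hvP, by simp [dotp_u', dotpDual_apply, g, hv1, hij]⟩
  have hG : IsFacetNormal P {y ∈ P | dotp u' y = 1} u' := by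
    refine isFacetNormal_iff_span_eq_top.2 ⟨⟨w, hw.1, (dotp_u' w).trans tilt_w⟩,
      fun y hy => (dotp_u' y).trans_le (tilt_le y hy), rfl, ?_⟩
    rw [eq_top_iff, ← span_insert_diff_eq_top_of_coord_ne_zero b g_w.ne, hb]
    exact Submodule.span_mono fun v hv => ⟨(vertices_mem hv).1.1, (vertices_mem hv).2⟩
  exact ⟨_, u', hG, ⟨t, t_pos, dotp_u'⟩, w, fun h => (coord_nonneg w h).not_gt g_w,
    hG.extremePoints_eq ▸ vertices_mem⟩

/-- On such a vertex the integral normal of the facet adjacent across the ridge opposite to `b i` is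
positive, hence equal to `1`; so the vertex is the only one of that facet outside `F`. -/
theorem subsingleton_setOf_coord_neg (hF : IsFacetNormal P F u) (hP : IsReflexive P)
    (hs : IsSimplicial P) {b : Module.Basis (Fin d) ℝ (Fin d → ℝ)}
    (hb : Set.range b = Set.extremePoints ℝ F) (i : Fin d) :
    {v ∈ Set.extremePoints ℝ P | dotp u v = 0 ∧ b.coord i v < 0}.Subsingleton := by
  obtain ⟨hlat, h0, hdual⟩ := hP
  obtain ⟨G, u', hG, ⟨t, t_pos, hu'⟩, w, hw, hwG⟩ := hF.exists_adjacent hlat.isPolytope h0 hb i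
  have ncard_F : (Set.extremePoints ℝ F).ncard = d := hs F ⟨u, hF⟩
  have ncard_G : (Set.extremePoints ℝ G).ncard = d := hs G ⟨u', hG⟩
  have extremePoints_G : insert w (Set.extremePoints ℝ F \ {b i}) = Set.extremePoints ℝ G := by
    refine Set.eq_of_subset_of_ncard_le hwG ?_ ?_
    · rw [Set.ncard_exchange hw (hb ▸ Set.mem_range_self i), ncard_F, ncard_G]
    · exact Set.finite_of_ncard_pos (hF.dim_pos.trans_eq ncard_G.symm)
  suffices ∀ v ∈ {v ∈ Set.extremePoints ℝ P | dotp u v = 0 ∧ b.coord i v < 0}, v = w from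
    fun x hx y hy => (this x hx).trans (this y hy).symm
  rintro v ⟨hv, hv0, hvneg⟩
  have dotp_pos : 0 < dotp u' v := by
    rw [hu', hv0, zero_sub, ← mul_neg]
    exact mul_pos t_pos (neg_pos.2 hvneg)
  have dotp_eq_one : dotp u' v = 1 := by
    obtain ⟨n, hn⟩ := (hG.isLP hdual).exists_dotp_eq_intCast (hlat.isLP_of_mem_extremePoints hv)
    have n_le : n ≤ 1 := by exact_mod_cast hn ▸ hG.dotp_le_one v hv.1
    have n_pos : 0 < n := by exact_mod_cast hn ▸ dotp_pos
    rw [hn, show n = 1 by omega, Int.cast_one]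
  obtain rfl | ⟨hvF, -⟩ : v ∈ insert w (Set.extremePoints ℝ F \ {b i}) := by
    rw [extremePoints_G, hG.extremePoints_eq]
    exact ⟨hv, dotp_eq_one⟩
  · rfl
  · exact absurd ((hF.dotp_eq_one v hvF.1).symm.trans hv0) one_ne_zero

theorem ncard_setOf_dotp_eq_zero_le (hF : IsFacetNormal P F u) (hP : IsReflexive P)
    (hs : IsSimplicial P) : {v ∈ Set.extremePoints ℝ P | dotp u v = 0}.ncard ≤ d := by
  have := Fin.pos_iff_nonempty.1 hF.dim_pos
  obtain ⟨b, hb⟩ := hF.exists_basis_range_eq_extremePoints hP.1.isPolytope (hs F ⟨u, hF⟩)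
  have dotp_b : ∀ i, dotp u (b i) = 1 := fun i =>
    hF.dotp_eq_one _ (hb ▸ Set.mem_range_self i : b i ∈ Set.extremePoints ℝ F).1
  have exists_coord_neg : {v ∈ Set.extremePoints ℝ P | dotp u v = 0} ⊆
      ⋃ i, {v ∈ Set.extremePoints ℝ P | dotp u v = 0 ∧ b.coord i v < 0} := by
    rintro v ⟨hv, hv0⟩
    have v_ne_zero : v ≠ 0 := by
      rintro rfl
      exact (disjoint_interior_extremePoints P).notMem_of_mem_left hP.2.1 hv
    obtain ⟨i, hi⟩ := exists_coord_neg_of_apply_nonpos b (f := (dotpDual u).toLinearMap)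
      (fun i => one_pos.trans_eq (dotp_b i).symm) v_ne_zero hv0.le
    exact Set.mem_iUnion.2 ⟨i, hv, hv0, hi⟩
  simpa using ncard_le_card_of_subset_iUnion exists_coord_neg
    (hF.subsingleton_setOf_coord_neg hP hs hb)

end IsFacetNormal

end Lattice

theorem stmt16_general {d : ℕ} {P : Set (Fin d → ℝ)} (hP : IsReflexive P) (hs : IsSimplicial P)
    {V : Finset (Fin d → ℝ)} (hV : (V : Set (Fin d → ℝ)) = Set.extremePoints ℝ P)
    {F : Set (Fin d → ℝ)} {u : Fin d → ℝ} (hF : IsFacetNormal P F u)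
    (hsum : 0 ≤ dotp u (∑ v ∈ V, v)) :
    {v ∈ Set.extremePoints ℝ P | dotp u v = 1}.ncard = d ∧
    {v ∈ Set.extremePoints ℝ P | dotp u v = 0}.ncard ≤ d ∧
    0 ≤ (d : ℝ) + ∑ v ∈ V, (if dotp u v ≤ -1 then dotp u v else 0) ∧
    {v ∈ Set.extremePoints ℝ P | dotp u v ≤ -1}.ncard ≤ d := by
  have ncard_eq_card_filter : ∀ (p : (Fin d → ℝ) → Prop) [DecidablePred p],
      {v ∈ Set.extremePoints ℝ P | p v}.ncard = {v ∈ V | p v}.card := fun p _ => by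
    rw [← hV, ← Set.ncard_coe_finset, Finset.coe_filter]
    rfl
  have lattice_mem : ∀ v ∈ V, v ∈ P ∧ IsLP v := fun v hv =>
    have hv : v ∈ Set.extremePoints ℝ P := hV ▸ hv
    ⟨hv.1, hP.1.isLP_of_mem_extremePoints hv⟩
  have ncard_one : {v ∈ Set.extremePoints ℝ P | dotp u v = 1}.ncard = d := by
    rw [← hF.extremePoints_eq, hs F ⟨u, hF⟩]
  have sum_nonneg : 0 ≤ (d : ℝ) + ∑ v ∈ V, (if dotp u v ≤ -1 then dotp u v else 0) := by
    have := hF.dotp_sum_le hP.2.2 lattice_mem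
    rw [← ncard_eq_card_filter, ncard_one] at this
    exact hsum.trans this
  refine ⟨ncard_one, hF.ncard_setOf_dotp_eq_zero_le hP hs, sum_nonneg, ?_⟩
  rw [ncard_eq_card_filter]
  exact_mod_cast (card_filter_le_neg_one_le_neg_sum V (dotp u)).trans
    (neg_le_iff_add_nonneg.2 sum_nonneg)

/-- for a special facet `F` of a simplicial reflexive polytope:
`|H_P(F,1)| = d`, `|H_P(F,0)| ≤ d`, `0 ≤ d + ∑_{i ≤ -1} i·|H_P(F,i)|`, and in particular
`∑_{i ≤ -1} |H_P(F,i)| ≤ d`. -/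
theorem stmt16 {d : ℕ} (P : Set (Fin d → ℝ)) (hP : IsReflexive P) (hs : IsSimplicial P)
    (V : Finset (Fin d → ℝ)) (hV : (V : Set (Fin d → ℝ)) = Set.extremePoints ℝ P)
    (F : Set (Fin d → ℝ)) (u : Fin d → ℝ) (hF : IsFacetNormal P F u)
    (hspec : ∃ t : ℝ, 0 ≤ t ∧ ∃ x ∈ F, (∑ v ∈ V, v) = t • x) :
    {v ∈ Set.extremePoints ℝ P | dotp u v = 1}.ncard = d ∧
    {v ∈ Set.extremePoints ℝ P | dotp u v = 0}.ncard ≤ d ∧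
    0 ≤ (d : ℝ) + ∑ v ∈ V, (if dotp u v ≤ -1 then dotp u v else 0) ∧
    {v ∈ Set.extremePoints ℝ P | dotp u v ≤ -1}.ncard ≤ d := by
  obtain ⟨t, ht, x, hx, hsum⟩ := hspec
  refine stmt16_general hP hs hV hF ?_
  rw [hsum, ← dotpDual_apply, map_smul, dotpDual_apply, hF.dotp_eq_one x hx, smul_eq_mul, mul_one]
  exact ht
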